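/- Let n ≥ 3 and let d ∈ ℝ^{1,n} satisfy d·d > 0, d·(−K) > 0, and d·E > 0 for every exceptional class E ∈ ℰ_K. Then d is a finite positive linear combination of exceptional classes: there exist a finite subset S ⊆ ℰ_K and positive real numbers c_E (E ∈ S) such that d = Σ_{E∈S} c_E E. (Theorem 2.5 of the paper: every c₁-positive symplectic class on a rational surface is a positive combination of exceptional classes.) -/

import Mathlib

/-!
Let `C` be the convex cone generated by the exceptional classes; it is preserved by `W_n`.

The numbers `(w d) · H = d · w⁻¹H`, `w ∈ W_n`, have a minimum, because the classes `w⁻¹H` are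
integral of square `1` and positive on `d`, and `d · d > 0` bounds those with `d · w⁻¹H ≤ d · H`
(`exists_min`). At a minimum, after sorting, `x = w d = (ν | m_1, …, m_n)` is reduced:
`m_1 ≥ ⋯ ≥ m_n > 0` and `ν ≥ m_1 + m_2 + m_3`, the last inequality because the Cremona
transformation does not decrease `ν`. So it suffices that a reduced class with `x · (-K) > 0` lies
in `C` (`CC_reduced`).

A reduced class is a nonnegative combination of `g_0 = 3H`, `g_1 = H - E_1`, `g_2 = H - E_2` and
`g_j = 3H - E_1 - ⋯ - E_j`, `3 ≤ j ≤ n` (`decomp`). For `j ≤ 8` the class `g_j` has positive degree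
against `-K` and is an explicit positive sum of exceptional classes (`CC_gen`). For `j ≥ 9` its degree
`9 - j` is not positive, but `g_j + t g_i` with `i ≤ 8` is in `C` whenever its degree is positive
(`gen_pair`). Since the total degree of `x` is positive, `x` can be rearranged into a combination of
such pairs and of the `g_i`, `i ≤ 8` (`transport`).

The statement on pairs rests on the case `|S| = 9`: for `f = 3H - E_S` and `c ∈ S`, the class
`f + ε E_c` is in `C` for all `ε > 0` (`CC_nine`). The classes `E_c ± N (E_a - E_b) + N² f` are
exceptional, and their sum `2 E_c + 2 N² f` approaches the ray of `f`. From nine indices one passes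
to more by averaging over the omitted index (`CC_A`), and, for the rulings `H - E_a`, by averaging
over Cremona reflections as well (`CC_B`).
-/

open Finset

noncomputable section

/-- The intersection pairing on ℝ^{1,n}: coordinate `0` is the coefficient of `H`,
coordinate `i.succ` is the coefficient of `E_{i+1}`.  `H·H = 1`, `E_i·E_i = -1`,
distinct basis vectors are orthogonal. -/
def ip (n : ℕ) (x y : Fin (n + 1) → ℝ) : ℝ :=
  x 0 * y 0 - ∑ i : Fin n, x i.succ * y i.succ

/-- The canonical class `K = -3H + E_1 + ⋯ + E_n`. -/
def Kc (n : ℕ) : Fin (n + 1) → ℝ := fun j => if (j : ℕ) = 0 then -3 else 1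

/-- The reflection `x ↦ x + (x·l)l` along `l`. -/
def reflAlong (n : ℕ) (l : Fin (n + 1) → ℝ) : Function.End (Fin (n + 1) → ℝ) :=
  fun x => x + ip n x l • l

/-- The simple roots: `l_0 = H - E_1 - E_2 - E_3` and `l_i = E_i - E_{i+1}`
for `1 ≤ i ≤ n - 1`. -/
def root (n : ℕ) (i : Fin n) : Fin (n + 1) → ℝ :=
  if (i : ℕ) = 0 then
    fun j => if (j : ℕ) = 0 then 1 else if (j : ℕ) ≤ 3 then -1 else 0
  else
    fun j => if (j : ℕ) = (i : ℕ) then 1 else if (j : ℕ) = (i : ℕ) + 1 then -1 else 0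

/-- The Weyl group `W_n`, generated by the simple reflections `s_{l_0}, …, s_{l_{n-1}}`.
(The generators are involutions, so the submonoid they generate coincides with the
subgroup they generate.) -/
def Wgroup (n : ℕ) : Submonoid (Function.End (Fin (n + 1) → ℝ)) :=
  Submonoid.closure (Set.range fun i : Fin n => reflAlong n (root n i))

/-- The class `E_n`. -/
def En (n : ℕ) : Fin (n + 1) → ℝ := fun j => if (j : ℕ) = n then 1 else 0

/-- The set `ℰ_K` of exceptional classes: the `W_n`-orbit of `E_n`. -/
def EK (n : ℕ) : Set (Fin (n + 1) → ℝ) := {e | ∃ w ∈ Wgroup n, e = w (En n)}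

/-! ### Basis vectors and the pairing -/

/-- The class `H`. -/
def hh (n : ℕ) : Fin (n + 1) → ℝ := Pi.single 0 1

/-- The class `E_{i+1}`, for `i : Fin n`. -/
def ee {n : ℕ} (i : Fin n) : Fin (n + 1) → ℝ := Pi.single i.succ 1

@[simp] lemma hh_zero (n : ℕ) : hh n 0 = 1 := by simp [hh]
@[simp] lemma hh_succ {n : ℕ} (i : Fin n) : hh n i.succ = 0 := by simp [hh]
@[simp] lemma ee_zero {n : ℕ} (i : Fin n) : ee i 0 = 0 := by
  simp [ee, (Fin.succ_ne_zero i).symm]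
lemma ee_succ {n : ℕ} (i j : Fin n) : ee i j.succ = if j = i then 1 else 0 := by
  simp [ee, Pi.single_apply]

lemma ip_comm (n : ℕ) (x y : Fin (n + 1) → ℝ) : ip n x y = ip n y x := by
  simp [ip, mul_comm]
lemma ip_add_left (n : ℕ) (x y z : Fin (n + 1) → ℝ) :
    ip n (x + y) z = ip n x z + ip n y z := by
  simp [ip, add_mul, sum_add_distrib]; ring
lemma ip_smul_left (n : ℕ) (r : ℝ) (x z : Fin (n + 1) → ℝ) :
    ip n (r • x) z = r * ip n x z := by
  simp [ip, mul_sub, mul_sum, mul_assoc]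
lemma ip_add_right (n : ℕ) (x y z : Fin (n + 1) → ℝ) :
    ip n z (x + y) = ip n z x + ip n z y := by
  rw [ip_comm, ip_add_left, ip_comm n x, ip_comm n y]
lemma ip_smul_right (n : ℕ) (r : ℝ) (x z : Fin (n + 1) → ℝ) :
    ip n z (r • x) = r * ip n z x := by
  rw [ip_comm, ip_smul_left, ip_comm]
lemma ip_sub_right (n : ℕ) (x y z : Fin (n + 1) → ℝ) :
    ip n z (x - y) = ip n z x - ip n z y := by
  rw [sub_eq_add_neg, ← neg_one_smul ℝ y, ip_add_right, ip_smul_right]; ring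
lemma ip_hh (n : ℕ) (x : Fin (n + 1) → ℝ) : ip n x (hh n) = x 0 := by simp [ip]
lemma ip_ee {n : ℕ} (x : Fin (n + 1) → ℝ) (i : Fin n) : ip n x (ee i) = - x i.succ := by
  simp [ip, ee_succ]

/-- The root `H - E_a - E_b - E_c`; the reflection along it is the Cremona transformation
based at `a, b, c`. -/
def lr {n : ℕ} (a b c : Fin n) : Fin (n + 1) → ℝ := hh n - ee a - ee b - ee c

lemma ip_lr {n : ℕ} (x : Fin (n + 1) → ℝ) (a b c : Fin n) :
    ip n x (lr a b c) = x 0 + x a.succ + x b.succ + x c.succ := by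
  simp [lr, ip_sub_right, ip_hh, ip_ee]

lemma root_zero {n : ℕ} (hn : 3 ≤ n) :
    root n ⟨0, by omega⟩ = lr ⟨0, by omega⟩ ⟨1, by omega⟩ ⟨2, by omega⟩ := by
  funext j
  refine Fin.cases ?_ (fun k => ?_) j
  · simp [root, lr]
  · obtain ⟨k, hk⟩ := k
    simp only [root, lr, if_pos, Pi.sub_apply, hh_succ, ee_succ, Fin.val_succ, Fin.mk.injEq]
    rcases k with _ | _ | _ | k <;> simp

lemma root_pos {m : ℕ} (i : Fin m) :
    root (m + 1) i.succ = ee i.castSucc - ee i.succ := by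
  funext j
  refine Fin.cases ?_ (fun k => ?_) j
  · simp [root]
  · simp only [root, Fin.val_succ, Pi.sub_apply, ee_succ, Fin.ext_iff, Fin.val_castSucc]
    simp only [Nat.add_eq_zero_iff, one_ne_zero, and_false, if_false]
    by_cases h1 : (k : ℕ) = i
    · simp [h1]
    · simp [h1]; split_ifs <;> simp

/-! ### Permutations and Cremona transformations in `W_n` -/

/-- The permutation `σ` acting on the `E`-coordinates (a right action). -/
def permAct {n : ℕ} (σ : Equiv.Perm (Fin n)) (x : Fin (n + 1) → ℝ) : Fin (n + 1) → ℝ :=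
  Fin.cons (x 0) fun i => x (σ i).succ

@[simp] lemma permAct_zero {n : ℕ} (σ : Equiv.Perm (Fin n)) (x : Fin (n + 1) → ℝ) :
    permAct σ x 0 = x 0 := rfl

@[simp] lemma permAct_succ {n : ℕ} (σ : Equiv.Perm (Fin n)) (x : Fin (n + 1) → ℝ) (i : Fin n) :
    permAct σ x i.succ = x (σ i).succ := rfl

lemma refl_root_pos {m : ℕ} (i : Fin m) (x : Fin (m + 1 + 1) → ℝ) :
    reflAlong (m + 1) (root (m + 1) i.succ) x = permAct (Equiv.swap i.castSucc i.succ) x := by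
  rw [root_pos]
  funext j
  have hne : i.castSucc ≠ i.succ := by simp [Fin.ext_iff]
  refine Fin.cases ?_ (fun k => ?_) j
  · simp [reflAlong, permAct]
  · simp only [reflAlong, permAct, ip_sub_right, ip_ee, Pi.add_apply, Pi.smul_apply, Pi.sub_apply,
      ee_succ, Fin.cons_succ, smul_eq_mul]
    by_cases h1 : k = i.castSucc
    · subst h1; simp [hne]
    · by_cases h2 : k = i.succ
      · subst h2; simp [hne.symm]
      · simp [h1, h2, Equiv.swap_apply_of_ne_of_ne h1 h2]

lemma permAct_mem {n : ℕ} (hn : 3 ≤ n) (σ : Equiv.Perm (Fin n)) :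
    ∃ w ∈ Wgroup n, ∀ x, w x = permAct σ x := by
  obtain ⟨m, rfl⟩ : ∃ m, n = m + 1 := ⟨n - 1, by omega⟩
  have hσ : σ ∈ Submonoid.closure (Set.range fun i : Fin m => Equiv.swap i.castSucc i.succ) := by
    rw [Equiv.Perm.mclosure_swap_castSucc_succ]; trivial
  induction hσ using Submonoid.closure_induction with
  | mem σ h =>
    obtain ⟨i, rfl⟩ := h
    exact ⟨_, Submonoid.subset_closure ⟨i.succ, rfl⟩, refl_root_pos i⟩
  | one =>
    refine ⟨1, one_mem _, fun x => ?_⟩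
    change x = _
    funext j
    refine Fin.cases ?_ (fun k => ?_) j <;> simp [permAct]
  | mul σ τ _ _ h1 h2 =>
    obtain ⟨w1, hw1, e1⟩ := h1
    obtain ⟨w2, hw2, e2⟩ := h2
    refine ⟨w2 * w1, mul_mem hw2 hw1, fun x => ?_⟩
    change w2 (w1 x) = _
    rw [e1, e2]
    funext j
    refine Fin.cases ?_ (fun k => ?_) j <;> simp [permAct]

lemma exists_perm3 {n : ℕ} {a b c a' b' c' : Fin n} (h1 : a ≠ b) (h2 : a ≠ c) (h3 : b ≠ c)
    (h1' : a' ≠ b') (h2' : a' ≠ c') (h3' : b' ≠ c') :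
    ∃ σ : Equiv.Perm (Fin n), σ a' = a ∧ σ b' = b ∧ σ c' = c := by
  have i1 : Function.Injective ![a', b', c'] := by
    intro i j; fin_cases i <;> fin_cases j <;> simp [h1', h2', h3', h1'.symm, h2'.symm, h3'.symm]
  have i2 : Function.Injective ![a, b, c] := by
    intro i j; fin_cases i <;> fin_cases j <;> simp [h1, h2, h3, h1.symm, h2.symm, h3.symm]
  obtain ⟨σ, hσ⟩ := (Equiv.Perm.isMultiplyPretransitive (Fin n) 3).exists_smul_eq
    ⟨_, i1⟩ ⟨_, i2⟩
  have := fun i => DFunLike.congr_fun hσ i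
  exact ⟨σ, by simpa using this 0, by simpa using this 1, by simpa using this 2⟩

/-- `W_n` contains the Cremona transformation at any three distinct indices: a conjugate of
`s_{l_0}` by a permutation. -/
lemma cremona_mem {n : ℕ} (hn : 3 ≤ n) {a b c : Fin n} (h1 : a ≠ b) (h2 : a ≠ c) (h3 : b ≠ c) :
    ∃ w ∈ Wgroup n, ∀ x, w x = x + ip n x (lr a b c) • lr a b c := by
  obtain ⟨σ, ha, hb, hc⟩ := exists_perm3 (a' := ⟨0, by omega⟩) (b' := ⟨1, by omega⟩)
    (c' := ⟨2, by omega⟩) h1 h2 h3 (by simp) (by simp) (by simp)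
  obtain ⟨w1, hw1, e1⟩ := permAct_mem hn σ
  obtain ⟨w2, hw2, e2⟩ := permAct_mem hn σ.symm
  refine ⟨w2 * (reflAlong n (root n ⟨0, by omega⟩) * w1),
    mul_mem hw2 (mul_mem (Submonoid.subset_closure ⟨_, rfl⟩) hw1), fun x => ?_⟩
  change w2 (reflAlong n _ (w1 x)) = _
  rw [e1, e2, root_zero hn]
  have key : ip n (permAct σ x) (lr ⟨0, by omega⟩ ⟨1, by omega⟩ ⟨2, by omega⟩)
      = ip n x (lr a b c) := by
    rw [ip_lr, ip_lr, permAct_zero, permAct_succ, permAct_succ, permAct_succ, ha, hb, hc]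
  simp only [reflAlong, key]
  funext j
  refine Fin.cases ?_ (fun k => ?_) j
  · simp [permAct, lr]
  · simp [permAct, lr, ee_succ, Equiv.symm_apply_eq, ha, hb, hc]

/-! ### General properties of `W_n` -/

lemma refl_add (n : ℕ) (l x y : Fin (n + 1) → ℝ) :
    reflAlong n l (x + y) = reflAlong n l x + reflAlong n l y := by
  simp only [reflAlong, ip_add_left, add_smul]; abel

lemma refl_smul (n : ℕ) (l : Fin (n + 1) → ℝ) (r : ℝ) (x : Fin (n + 1) → ℝ) :
    reflAlong n l (r • x) = r • reflAlong n l x := by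
  simp only [reflAlong, ip_smul_left, smul_add, smul_smul]

lemma W_linear {n : ℕ} {w : Function.End (Fin (n + 1) → ℝ)} (hw : w ∈ Wgroup n) :
    (∀ x y, w (x + y) = w x + w y) ∧ ∀ (r : ℝ) x, w (r • x) = r • w x := by
  induction hw using Submonoid.closure_induction with
  | mem w h => obtain ⟨i, rfl⟩ := h; exact ⟨refl_add n _, refl_smul n _⟩
  | one => exact ⟨fun _ _ => rfl, fun _ _ => rfl⟩
  | mul u v _ _ hu hv =>
    refine ⟨fun x y => ?_, fun r x => ?_⟩
    · change u (v _) = u (v _) + u (v _)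
      rw [hv.1, hu.1]
    · change u (v _) = r • u (v _)
      rw [hv.2, hu.2]

lemma root_cases {n : ℕ} (hn : 3 ≤ n) (i : Fin n) :
    (∃ a b c : Fin n, a ≠ b ∧ a ≠ c ∧ b ≠ c ∧ root n i = lr a b c) ∨
      ∃ a b : Fin n, a ≠ b ∧ root n i = ee a - ee b := by
  obtain ⟨m, rfl⟩ : ∃ m, n = m + 1 := ⟨n - 1, by omega⟩
  refine Fin.cases ?_ (fun k => ?_) i
  · exact Or.inl ⟨_, _, _, by simp, by simp, by simp, root_zero hn⟩
  · exact Or.inr ⟨_, _, by simp [Fin.ext_iff], root_pos k⟩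

lemma root_sq {n : ℕ} (hn : 3 ≤ n) (i : Fin n) : ip n (root n i) (root n i) = -2 := by
  rcases root_cases hn i with ⟨a, b, c, h1, h2, h3, h⟩ | ⟨a, b, h1, h⟩ <;> rw [h]
  · rw [ip_lr]
    simp [lr, ee_succ, h1, h2, h3, h1.symm, h2.symm, h3.symm]; norm_num
  · simp [ip_sub_right, ip_ee, ee_succ, h1, h1.symm]; norm_num

lemma root_K {n : ℕ} (hn : 3 ≤ n) (i : Fin n) : ip n (-Kc n) (root n i) = 0 := by
  rcases root_cases hn i with ⟨a, b, c, h1, h2, h3, h⟩ | ⟨a, b, h1, h⟩ <;> rw [h]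
  · rw [ip_lr]; simp [Kc]; norm_num
  · simp [ip_sub_right, ip_ee, Kc]

lemma root_int {n : ℕ} (i : Fin n) (j) : ∃ k : ℤ, root n i j = k := by
  unfold root
  split_ifs with h0
  · dsimp only; split_ifs
    exacts [⟨1, by simp⟩, ⟨-1, by simp⟩, ⟨0, by simp⟩]
  · dsimp only; split_ifs
    exacts [⟨1, by simp⟩, ⟨-1, by simp⟩, ⟨0, by simp⟩]

/-- Elements of `W_n` are isometries, stated as: each has an inverse in `W_n` which is also its
adjoint. -/
lemma W_inv {n : ℕ} (hn : 3 ≤ n) {w : Function.End (Fin (n + 1) → ℝ)} (hw : w ∈ Wgroup n) :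
    ∃ w' ∈ Wgroup n, (∀ x, w' (w x) = x) ∧ ∀ x y, ip n (w x) y = ip n x (w' y) := by
  induction hw using Submonoid.closure_induction with
  | mem w h =>
    obtain ⟨i, rfl⟩ := h
    refine ⟨_, Submonoid.subset_closure ⟨i, rfl⟩, fun x => ?_, fun x y => ?_⟩
    · simp only [reflAlong, ip_add_left, ip_smul_left, root_sq hn]
      module
    · simp only [reflAlong, ip_add_left, ip_smul_left, ip_add_right, ip_smul_right]
      rw [ip_comm n (root n i) y]; ring
  | one => exact ⟨1, one_mem _, fun _ => rfl, fun _ _ => rfl⟩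
  | mul u v _ _ hu hv =>
    obtain ⟨u', hu', iu, au⟩ := hu
    obtain ⟨v', hv', iv, av⟩ := hv
    refine ⟨v' * u', mul_mem hv' hu', fun x => ?_, fun x y => ?_⟩
    · change v' (u' (u (v x))) = x
      rw [iu, iv]
    · change ip n (u (v x)) y = ip n x (v' (u' y))
      rw [au, av]

lemma W_K {n : ℕ} (hn : 3 ≤ n) {w : Function.End (Fin (n + 1) → ℝ)} (hw : w ∈ Wgroup n) :
    w (-Kc n) = -Kc n := by
  induction hw using Submonoid.closure_induction with
  | mem w h => obtain ⟨i, rfl⟩ := h; simp [reflAlong, root_K hn]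
  | one => rfl
  | mul u v _ _ hu hv => change u (v _) = _; rw [hv, hu]

/-- `x` lies in the lattice `ℤ^{1,n}`. -/
def IsInt {n : ℕ} (x : Fin (n + 1) → ℝ) : Prop := ∃ z : Fin (n + 1) → ℤ, ∀ j, x j = z j

lemma W_int {n : ℕ} {w : Function.End (Fin (n + 1) → ℝ)} (hw : w ∈ Wgroup n) :
    ∀ x, IsInt x → IsInt (w x) := by
  induction hw using Submonoid.closure_induction with
  | mem w h =>
    obtain ⟨i, rfl⟩ := h
    rintro x ⟨z, hz⟩
    choose r hr using root_int i
    refine ⟨fun j => z j + (z 0 * r 0 - ∑ i : Fin n, z i.succ * r i.succ) * r j, fun j => ?_⟩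
    simp [reflAlong, ip, hz, hr]
  | one => exact fun x h => h
  | mul u v _ _ hu hv => exact fun x h => hu _ (hv _ h)

/-! ### Exceptional classes -/

lemma EK_W {n : ℕ} {w : Function.End (Fin (n + 1) → ℝ)} (hw : w ∈ Wgroup n)
    {x : Fin (n + 1) → ℝ} (hx : x ∈ EK n) : w x ∈ EK n := by
  obtain ⟨u, hu, rfl⟩ := hx
  exact ⟨w * u, mul_mem hw hu, rfl⟩

lemma EK_cremona {n : ℕ} (hn : 3 ≤ n) {a b c : Fin n} (h1 : a ≠ b) (h2 : a ≠ c) (h3 : b ≠ c)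
    {x : Fin (n + 1) → ℝ} (hx : x ∈ EK n) : x + ip n x (lr a b c) • lr a b c ∈ EK n := by
  obtain ⟨w, hw, e⟩ := cremona_mem hn h1 h2 h3
  rw [← e]; exact EK_W hw hx

lemma EK_ee {n : ℕ} (hn : 3 ≤ n) (i : Fin n) : ee i ∈ EK n := by
  obtain ⟨w, hw, e⟩ := permAct_mem hn (Equiv.swap ⟨n - 1, by omega⟩ i)
  have h0 : En n ∈ EK n := ⟨1, one_mem _, rfl⟩
  have h1 : En n = ee ⟨n - 1, by omega⟩ := by
    funext j
    refine Fin.cases ?_ (fun k => ?_) j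
    · simp [En, show (0:ℕ) ≠ n by omega]
    · simp only [En, ee_succ, Fin.ext_iff, Fin.val_succ]
      have := k.2
      congr 1; simp only [eq_iff_iff]; omega
  have := EK_W hw h0
  rw [e, h1] at this
  convert this using 1
  funext j
  refine Fin.cases ?_ (fun k => ?_) j
  · simp [permAct]
  · simp [permAct, ee_succ, Equiv.swap_apply_eq_iff]

lemma EK_line {n : ℕ} (hn : 3 ≤ n) {a b : Fin n} (hab : a ≠ b) :
    hh n - ee a - ee b ∈ EK n := by
  obtain ⟨c, hc⟩ : ∃ c : Fin n, c ∉ ({a, b} : Finset (Fin n)) := by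
    by_contra! h
    have := Finset.card_le_card (show (univ : Finset (Fin n)) ⊆ {a, b} from fun x _ => h x)
    have h2 := Finset.card_le_two (a := a) (b := b)
    simp at this; omega
  simp at hc
  have := EK_cremona hn hab (Ne.symm hc.1) (Ne.symm hc.2) (EK_ee hn c)
  convert this using 1
  have : ip n (ee c) (lr a b c) = 1 := by
    simp [ip_lr, ee_succ, Ne.symm hc.1, Ne.symm hc.2]
  rw [this, lr]; module

/-- The class `ν H - ∑ m_t E_{e t}`, supported on the indices selected by `e`. -/
def cls {n k : ℕ} (e : Fin k → Fin n) (ν : ℝ) (m : Fin k → ℝ) : Fin (n + 1) → ℝ :=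
  ν • hh n - ∑ t, m t • ee (e t)

lemma cls_zero {n k : ℕ} (e : Fin k → Fin n) (ν : ℝ) (m : Fin k → ℝ) : cls e ν m 0 = ν := by
  simp [cls]

lemma cls_succ {n k : ℕ} {e : Fin k → Fin n} (he : Function.Injective e) (ν : ℝ)
    (m : Fin k → ℝ) (t : Fin k) : cls e ν m (e t).succ = - m t := by
  simp [cls, ee_succ, he.eq_iff]

/-- A Cremona move at positions `i, j, l`, written in coordinates: `δ = ν - m_i - m_j - m_l` is added
to `ν` and to the three multiplicities. -/
lemma EK_cls {n k : ℕ} (hn : 3 ≤ n) {e : Fin k → Fin n} (he : Function.Injective e)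
    {ν : ℝ} {m : Fin k → ℝ} (h : cls e ν m ∈ EK n) (i j l : Fin k)
    (hij : i ≠ j) (hil : i ≠ l) (hjl : j ≠ l) (δ : ℝ) (hδ : δ = ν - m i - m j - m l)
    {ν' : ℝ} {m' : Fin k → ℝ} (hν : ν' = ν + δ)
    (hm : ∀ t, m' t = m t + ((if t = i then δ else 0) + (if t = j then δ else 0)
      + (if t = l then δ else 0))) : cls e ν' m' ∈ EK n := by
  have := EK_cremona hn (he.ne hij) (he.ne hil) (he.ne hjl) h
  rw [ip_lr, cls_zero, cls_succ he, cls_succ he, cls_succ he] at this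
  convert this using 1
  have e1 : ν + -m i + -m j + -m l = δ := by rw [hδ]; ring
  rw [e1]
  simp only [cls, hm, hν, lr, add_smul, sum_add_distrib, ite_smul, zero_smul, sum_ite_eq',
    mem_univ, if_true]
  module

/-- Write `f = 3H - E_{e 0} - ⋯ - E_{e 8}`, a null class. The exceptional classes below are
`E_{e 0} + N (E_{e 1} - E_{e 2}) + N² f`, the images of `E_{e 0}` under translations in the affine
Weyl group of type `E_8`. The step from `N` to `N + 1` is a transposition of `e 1` and `e 2`
followed by five Cremona moves. -/
lemma EK_translate {n : ℕ} (hn : 3 ≤ n) (N : ℕ) : ∀ e : Fin 9 → Fin n, Function.Injective e →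
    cls e (3 * N ^ 2) ![N ^ 2 - 1, N ^ 2 - N, N ^ 2 + N, N ^ 2, N ^ 2, N ^ 2, N ^ 2, N ^ 2, N ^ 2]
      ∈ EK n := by
  induction N with
  | zero =>
    intro e he
    convert EK_ee hn (e 0) using 1
    simp [cls, Fin.sum_univ_succ]
  | succ N ih =>
    intro e he
    have h0 : cls e (3 * N ^ 2)
        ![N ^ 2 - 1, N ^ 2 + N, N ^ 2 - N, N ^ 2, N ^ 2, N ^ 2, N ^ 2, N ^ 2, N ^ 2] ∈ EK n := by
      convert ih (e ∘ Equiv.swap 1 2) (he.comp (Equiv.injective _)) using 1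
      simp only [cls]
      congr 1
      rw [← Equiv.sum_comp (Equiv.swap (1 : Fin 9) 2)]
      refine sum_congr rfl fun t _ => ?_
      fin_cases t <;> rfl
    have h1 : cls e (3 * N ^ 2 + N)
        ![N ^ 2 - 1, N ^ 2 + N, N ^ 2, N ^ 2 + N, N ^ 2 + N, N ^ 2, N ^ 2, N ^ 2, N ^ 2]
          ∈ EK n := by
      refine EK_cls hn he h0 2 3 4 (by decide) (by decide) (by decide) N (by simp; ring) (by ring)
        fun t => ?_
      fin_cases t <;> simp
    have h2 : cls e (3 * N ^ 2 + 2 * N)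
        ![N ^ 2 - 1, N ^ 2 + N, N ^ 2 + N, N ^ 2 + N, N ^ 2 + N, N ^ 2 + N, N ^ 2 + N, N ^ 2, N ^ 2]
          ∈ EK n := by
      refine EK_cls hn he h1 2 5 6 (by decide) (by decide) (by decide) N (by simp; ring) (by ring)
        fun t => ?_
      fin_cases t <;> simp
    have h3 : cls e (3 * N ^ 2 + 4 * N + 1)
        ![N ^ 2 + 2 * N, N ^ 2 + N, N ^ 2 + N, N ^ 2 + N, N ^ 2 + N, N ^ 2 + N, N ^ 2 + N,
          N ^ 2 + 2 * N + 1, N ^ 2 + 2 * N + 1] ∈ EK n := by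
      refine EK_cls hn he h2 0 7 8 (by decide) (by decide) (by decide) (2 * N + 1)
        (by simp; ring) (by ring) fun t => ?_
      fin_cases t <;> simp <;> ring
    have h4 : cls e (3 * N ^ 2 + 5 * N + 2)
        ![N ^ 2 + 2 * N, N ^ 2 + N, N ^ 2 + 2 * N + 1, N ^ 2 + N, N ^ 2 + N, N ^ 2 + 2 * N + 1,
          N ^ 2 + 2 * N + 1, N ^ 2 + 2 * N + 1, N ^ 2 + 2 * N + 1] ∈ EK n := by
      refine EK_cls hn he h3 2 5 6 (by decide) (by decide) (by decide) (N + 1)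
        (by simp; ring) (by ring) fun t => ?_
      fin_cases t <;> simp <;> ring
    refine EK_cls hn he h4 2 3 4 (by decide) (by decide) (by decide) (N + 1)
        (by simp; ring) (by push_cast; ring) fun t => ?_
    fin_cases t <;> simp <;> ring

/-! ### The cone of exceptional classes -/

/-- The convex cone generated by the exceptional classes. -/
def CC (n : ℕ) : Submodule NNReal (Fin (n + 1) → ℝ) := Submodule.span NNReal (EK n)

lemma CC_EK {n : ℕ} {x : Fin (n + 1) → ℝ} (h : x ∈ EK n) : x ∈ CC n := Submodule.subset_span h

lemma CC_smul {n : ℕ} {x : Fin (n + 1) → ℝ} {r : ℝ} (hr : 0 ≤ r) (h : x ∈ CC n) :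
    r • x ∈ CC n := (CC n).smul_mem (⟨r, hr⟩ : NNReal) h

lemma CC_of_smul {n : ℕ} {x : Fin (n + 1) → ℝ} {r : ℝ} (hr : 0 < r) (h : r • x ∈ CC n) :
    x ∈ CC n := by
  have := CC_smul (inv_nonneg.2 hr.le) h
  rwa [smul_smul, inv_mul_cancel₀ hr.ne', one_smul] at this

lemma CC_W {n : ℕ} {w : Function.End (Fin (n + 1) → ℝ)} (hw : w ∈ Wgroup n)
    {x : Fin (n + 1) → ℝ} (hx : x ∈ CC n) : w x ∈ CC n := by
  obtain ⟨ha, hs⟩ := W_linear hw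
  induction hx using Submodule.span_induction with
  | mem x h => exact CC_EK (EK_W hw h)
  | zero =>
    have := hs 0 0
    rw [zero_smul, zero_smul] at this
    rw [this]; exact zero_mem _
  | add x y _ _ hx hy => rw [ha]; exact add_mem hx hy
  | smul r x _ hx =>
    have := hs r x
    change w ((r : ℝ) • x) ∈ _
    rw [this]; exact CC_smul r.2 hx

lemma CC_cremona {n : ℕ} (hn : 3 ≤ n) {a b c : Fin n} (h1 : a ≠ b) (h2 : a ≠ c) (h3 : b ≠ c)
    {x : Fin (n + 1) → ℝ} (hx : x ∈ CC n) : x + ip n x (lr a b c) • lr a b c ∈ CC n := by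
  obtain ⟨w, hw, e⟩ := cremona_mem hn h1 h2 h3
  rw [← e]; exact CC_W hw hx

lemma CC_elim {n : ℕ} {d : Fin (n + 1) → ℝ} (h : d ∈ CC n) :
    ∃ (S : Finset (Fin (n + 1) → ℝ)) (c : (Fin (n + 1) → ℝ) → ℝ),
      ↑S ⊆ EK n ∧ (∀ E ∈ S, 0 < c E) ∧ d = ∑ E ∈ S, c E • E := by
  obtain ⟨c, hc, hd⟩ := Submodule.mem_span_set.1 h
  refine ⟨c.support, fun E => (c E : ℝ), hc, fun E hE => ?_, hd.symm⟩
  have := Finsupp.mem_support_iff.1 hE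
  exact NNReal.coe_pos.2 (pos_iff_ne_zero.2 this)

/-- The class `E_S = ∑_{i ∈ S} E_i`. -/
def ES {n : ℕ} (S : Finset (Fin n)) : Fin (n + 1) → ℝ := ∑ i ∈ S, ee i

@[simp] lemma ES_zero {n : ℕ} (S : Finset (Fin n)) : ES S 0 = 0 := by simp [ES]
lemma ES_succ {n : ℕ} (S : Finset (Fin n)) (i : Fin n) :
    ES S i.succ = if i ∈ S then 1 else 0 := by simp [ES, ee_succ]
lemma ES_erase {n : ℕ} {S : Finset (Fin n)} {k : Fin n} (hk : k ∈ S) :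
    ES (S.erase k) = ES S - ee k := by
  rw [ES, ES, ← sum_erase_add S _ hk]; abel

lemma CC_ES {n : ℕ} (hn : 3 ≤ n) (S : Finset (Fin n)) : ES S ∈ CC n :=
  (CC n).sum_mem fun i _ => CC_EK (EK_ee hn i)

lemma CC_ruling {n : ℕ} (hn : 3 ≤ n) (a : Fin n) : hh n - ee a ∈ CC n := by
  obtain ⟨b, hb⟩ : ∃ b : Fin n, a ≠ b := by
    have : Nontrivial (Fin n) := Fin.nontrivial_iff_two_le.2 (by omega)
    obtain ⟨b, hb⟩ := exists_ne a
    exact ⟨b, hb.symm⟩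
  have := (CC n).add_mem (CC_EK (EK_line hn hb)) (CC_EK (EK_ee hn b))
  simpa using this

lemma CC_hh {n : ℕ} (hn : 3 ≤ n) : hh n ∈ CC n := by
  have := (CC n).add_mem (CC_ruling hn ⟨0, by omega⟩) (CC_EK (EK_ee hn ⟨0, by omega⟩))
  simpa using this

/-- If `f_S = 3H - E_S` with `|S| = 9`, then `f_S + ε E_c` is in the cone for every `ε > 0` and
`c ∈ S`: adding the classes of `EK_translate` for `N` and for the swapped indices gives
`2 E_c + 2 N² f_S`. -/
lemma CC_nine {n : ℕ} (hn : 3 ≤ n) {S : Finset (Fin n)} (hS : S.card = 9) {c : Fin n}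
    (hc : c ∈ S) {ε : ℝ} (hε : 0 < ε) : (3 : ℝ) • hh n - ES S + ε • ee c ∈ CC n := by
  obtain ⟨e, he, hec, heS⟩ : ∃ e : Fin 9 → Fin n, Function.Injective e ∧ e 0 = c ∧
      ES S = ∑ t, ee (e t) := by
    let f : Fin 9 ≃ S := (S.equivFinOfCardEq hS).symm
    let g : Fin 9 ≃ S := (Equiv.swap 0 (f.symm ⟨c, hc⟩)).trans f
    refine ⟨fun t => (g t : Fin n), Subtype.val_injective.comp g.injective, by simp [g], ?_⟩
    rw [g.sum_comp (fun s : S => ee (s : Fin n)), ES, ← sum_coe_sort S]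
  obtain ⟨N, hN⟩ := exists_nat_gt (1 / ε)
  have hN0 : (0 : ℝ) < N := lt_trans (by positivity) hN
  have hN1 : (1 : ℝ) ≤ N := by
    have : 0 < N := by exact_mod_cast hN0
    exact_mod_cast this
  have h1 := CC_EK (EK_translate hn N e he)
  have h2 := CC_EK (EK_translate hn N (e ∘ Equiv.swap 1 2) (he.comp (Equiv.injective _)))
  have h3 : ((2 : ℝ) * N ^ 2) • ((3 : ℝ) • hh n - ES S + (1 / (N : ℝ) ^ 2) • ee c) ∈ CC n := by
    convert (CC n).add_mem h1 h2 using 1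
    have s0 : Equiv.swap (1 : Fin 9) 2 0 = 0 := by decide
    have s3 : Equiv.swap (1 : Fin 9) 2 3 = 3 := by decide
    have s4 : Equiv.swap (1 : Fin 9) 2 4 = 4 := by decide
    have s5 : Equiv.swap (1 : Fin 9) 2 5 = 5 := by decide
    have s6 : Equiv.swap (1 : Fin 9) 2 6 = 6 := by decide
    have s7 : Equiv.swap (1 : Fin 9) 2 7 = 7 := by decide
    have s8 : Equiv.swap (1 : Fin 9) 2 8 = 8 := by decide
    have hN2 : (2 * (N : ℝ) ^ 2) * (1 / N ^ 2) = 2 := by field_simp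
    rw [smul_add, smul_smul, hN2, heS, ← hec]
    simp [cls, Fin.sum_univ_succ, s0, s3, s4, s5, s6, s7, s8]
    module
  have h4 := CC_of_smul (by positivity) h3
  have h5 : 1 / (N : ℝ) ^ 2 ≤ ε := by
    have : 1 / (N : ℝ) ^ 2 ≤ 1 / N := by
      apply one_div_le_one_div_of_le hN0; nlinarith
    have : 1 / (N : ℝ) < ε := by
      rw [div_lt_iff₀ hN0]; rw [div_lt_iff₀ hε] at hN; linarith
    linarith
  have h6 := (CC n).add_mem h4 (CC_smul (sub_nonneg.2 h5) (CC_EK (EK_ee hn c)))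
  convert h6 using 1
  module

/-! ### Pairs of generators of positive degree -/

/-- For disjoint `S₀`, `T` with `|S₀| + m = 9`, `r (3H - E_{S₀}) - E_T` is in the cone as soon as its
degree `r m - |T|` is positive. If `|T| = m` this follows from `CC_nine`; in general it is the
average over `x ∈ T` of the same statement for `T \ {x}`. -/
lemma CC_A {n : ℕ} (hn : 3 ≤ n) {S₀ : Finset (Fin n)} {m : ℕ} (hm : 0 < m)
    (hS : S₀.card + m = 9) (k : ℕ) : ∀ T : Finset (Fin n), Disjoint S₀ T → T.card = m + k →
    ∀ r : ℝ, (T.card : ℝ) < r * m → r • ((3 : ℝ) • hh n - ES S₀) - ES T ∈ CC n := by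
  induction k with
  | zero =>
    intro T hd hT r hr
    have hm' : (0 : ℝ) < m := by exact_mod_cast hm
    have hr1 : 1 < r := by
      rw [hT, add_zero] at hr
      nlinarith
    obtain ⟨c, hc⟩ : T.Nonempty := card_pos.1 (by omega)
    have h9 : (S₀ ∪ T).card = 9 := by rw [card_union_of_disjoint hd]; omega
    have hU : ES (S₀ ∪ T) = ES S₀ + ES T := sum_union hd
    have hpos : 0 < (r - 1) / r := div_pos (by linarith) (by linarith)
    have h1 := CC_smul (r := r) (by linarith) (CC_nine hn h9 (mem_union_right _ hc) hpos)
    have h2 := CC_smul (r := r - 1) (by linarith) (CC_ES hn (T.erase c))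
    convert (CC n).add_mem h1 h2 using 1
    rw [hU, ES_erase hc, smul_add r, smul_smul, mul_div_cancel₀ _ (by linarith)]
    module
  | succ k ih =>
    intro T hd hT r hr
    have ht : (0 : ℝ) < (m + k : ℕ) := by exact_mod_cast (by omega : 0 < m + k)
    set t : ℝ := ((m + k : ℕ) : ℝ) with ht'
    have hTc : (T.card : ℝ) = t + 1 := by rw [hT, ht']; push_cast; ring
    have hX : ∀ x ∈ T, (r * t / (t + 1)) • ((3 : ℝ) • hh n - ES S₀) - ES (T.erase x) ∈ CC n := by
      intro x hx
      have hc : (T.erase x).card = m + k := by rw [card_erase_of_mem hx]; omega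
      refine ih _ (hd.mono_right (erase_subset _ _)) hc _ ?_
      rw [hc, ← ht', div_mul_eq_mul_div, lt_div_iff₀ (by linarith)]
      rw [hTc] at hr
      nlinarith
    have h := (CC n).sum_mem hX
    refine CC_of_smul ht ?_
    convert h using 1
    rw [sum_congr rfl fun x hx => by rw [ES_erase hx], sum_sub_distrib, sum_sub_distrib, sum_const,
      sum_const, ← Nat.cast_smul_eq_nsmul ℝ, ← Nat.cast_smul_eq_nsmul ℝ, hTc, smul_smul,
      mul_div_cancel₀ _ (by linarith : t + 1 ≠ 0)]
    change _ = _ - (_ - ES T)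
    module

/-- With `|T| = 8 + k`, the class `3H - E_a - E_T + r (H - E_a)` is in the cone as soon as its
degree `2 r - k` is positive. For `k = 0` this follows from `CC_nine`. For larger `k`, let `X_x` be
the class with `T` replaced by `T \ {x}` and `r` by `r - 1/2`; the midpoints of `X_x` and its
reflections along `H - E_a - E_x - E_y`, averaged over all `x ≠ y` in `T`, give the claim. -/
lemma CC_B {n : ℕ} (hn : 3 ≤ n) {a : Fin n} (k : ℕ) : ∀ T : Finset (Fin n), a ∉ T →
    T.card = 8 + k → ∀ r : ℝ, (k : ℝ) / 2 < r →
    (3 : ℝ) • hh n - ee a - ES T + r • (hh n - ee a) ∈ CC n := by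
  induction k with
  | zero =>
    intro T ha hT r hr
    have hr0 : 0 < r := by simpa using hr
    obtain ⟨c, hc⟩ : T.Nonempty := card_pos.1 (by omega)
    have hac : a ≠ c := fun h => ha (h ▸ hc)
    have h9 : (insert a T).card = 9 := by rw [card_insert_of_notMem ha]; omega
    have hU : ES (insert a T) = ee a + ES T := sum_insert ha
    have h1 := CC_nine hn h9 (mem_insert_of_mem hc) hr0
    have h2 := CC_smul hr0.le (CC_EK (EK_line hn hac))
    convert (CC n).add_mem h1 h2 using 1
    rw [hU]; module
  | succ k ih =>
    intro T ha hT r hr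
    have ht : (0 : ℝ) < (8 + k : ℕ) := by exact_mod_cast (by omega : 0 < 8 + k)
    set t : ℝ := ((8 + k : ℕ) : ℝ) with ht'
    have hTc : (T.card : ℝ) = t + 1 := by rw [hT, ht']; push_cast; ring
    set B : Fin (n + 1) → ℝ := (3 : ℝ) • hh n - ee a + (r - 1 / 2) • (hh n - ee a) with hB
    have hX : ∀ x ∈ T, t • (B - ES (T.erase x)) +
        (1 / 2 : ℝ) • (t • (hh n - ee a - ee x) - ES (T.erase x)) ∈ CC n := by
      intro x hx
      have hc : (T.erase x).card = 8 + k := by rw [card_erase_of_mem hx]; omega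
      have hXx : B - ES (T.erase x) ∈ CC n := by
        convert ih (T.erase x) (fun h => ha (mem_of_mem_erase h)) hc (r - 1 / 2)
          (by push_cast at hr; linarith) using 1
        rw [hB]; abel
      have hY : ∀ y ∈ T.erase x, B - ES (T.erase x) + (1 / 2 : ℝ) • lr a x y ∈ CC n := by
        intro y hy
        have hyT := mem_of_mem_erase hy
        have hxy : x ≠ y := (ne_of_mem_erase hy).symm
        have hax : a ≠ x := fun h => ha (h ▸ hx)
        have hay : a ≠ y := fun h => ha (h ▸ hyT)
        have h1 := CC_cremona hn hax hay hxy hXx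
        have h2 : ip n (B - ES (T.erase x)) (lr a x y) = 1 := by
          rw [ip_lr, hB]
          simp [ee_succ, ES_succ, ha, hax.symm, hay.symm, hxy.symm, hyT]
          ring
        rw [h2] at h1
        refine CC_of_smul (r := 2) two_pos ?_
        convert (CC n).add_mem hXx h1 using 1
        module
      convert (CC n).sum_mem hY using 1
      simp only [lr, smul_sub, sum_add_distrib, sum_sub_distrib, sum_const, hc,
        ← Nat.cast_smul_eq_nsmul ℝ, ← smul_sum]
      rw [← ht']
      change _ = t • B - t • _ + (_ - (1 / 2 : ℝ) • ES (T.erase x))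
      module
    refine CC_of_smul (r := t * (t + 1)) (by positivity) ?_
    convert (CC n).sum_mem hX using 1
    rw [sum_congr rfl fun x hx => by rw [ES_erase hx]]
    simp only [smul_sub, sum_add_distrib, sum_sub_distrib, sum_const,
        ← Nat.cast_smul_eq_nsmul ℝ, ← smul_sum, hTc]
    change _ = (t + 1) • t • B - ((t + 1) • t • ES T - t • ES T) +
      ((t + 1) • (1 / 2 : ℝ) • t • hh n - (t + 1) • (1 / 2 : ℝ) • t • ee a
        - (1 / 2 : ℝ) • t • ES T - ((t + 1) • (1 / 2 : ℝ) • ES T - (1 / 2 : ℝ) • ES T))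
    rw [hB]
    module

/-- The first `j` indices. -/
def ini (n j : ℕ) : Finset (Fin n) := univ.filter fun i => (i : ℕ) < j

lemma mem_ini {n j : ℕ} {i : Fin n} : i ∈ ini n j ↔ (i : ℕ) < j := by simp [ini]

lemma ini_eq {n j : ℕ} (hj : j ≤ n) : ini n j = univ.map (Fin.castLEEmb hj) := by
  ext i
  simp only [mem_ini, mem_map, mem_univ, true_and]
  exact ⟨fun h => ⟨⟨i, h⟩, rfl⟩, by rintro ⟨t, rfl⟩; exact t.2⟩

lemma card_ini {n j : ℕ} (hj : j ≤ n) : (ini n j).card = j := by simp [ini_eq hj]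

/-- The family `3H`, `H - E_1`, `H - E_2`, and `3H - E_1 - ⋯ - E_j` for `j ≥ 3`, which generates the
cone of reduced classes with nonnegative multiplicities. -/
def gen (n : ℕ) (hn : 3 ≤ n) (j : ℕ) : Fin (n + 1) → ℝ :=
  match j with
  | 0 => (3 : ℝ) • hh n
  | 1 => hh n - ee ⟨0, by omega⟩
  | 2 => hh n - ee ⟨1, by omega⟩
  | j + 3 => (3 : ℝ) • hh n - ES (ini n (j + 3))

lemma EK_conic {n : ℕ} (hn : 3 ≤ n) {k : ℕ} {e : Fin k → Fin n} (he : Function.Injective e)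
    {a b : Fin k} (hab : a ≠ b) :
    cls e 1 (fun t => (if t = a then 1 else 0) + (if t = b then 1 else 0)) ∈ EK n := by
  convert EK_line hn (he.ne hab) using 1
  simp [cls, add_smul, sum_add_distrib]
  abel

/-- The anticanonical class of a blowup in `3 ≤ j ≤ 8` points, as an explicit positive
combination of exceptional classes, rulings and `H`. -/
lemma CC_gen_aux {n : ℕ} (hn : 3 ≤ n) {j : ℕ} (hj : j ≤ n) (h3 : 3 ≤ j) (h8 : j ≤ 8) :
    (3 : ℝ) • hh n - ES (ini n j) ∈ CC n := by
  have he : Function.Injective (Fin.castLE hj) := Fin.castLE_injective hj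
  have hE : ES (ini n j) = ∑ t : Fin j, ee (Fin.castLE hj t) := by
    rw [ini_eq hj, ES, sum_map]; rfl
  rw [hE]
  have hR := fun t : Fin j => CC_ruling hn (Fin.castLE hj t)
  have hL := fun (s t : Fin j) (h : s ≠ t) => CC_EK (EK_line hn (he.ne h))
  have hH := CC_hh hn
  interval_cases j
  · convert add_mem (add_mem (hR 0) (hR 1)) (hR 2) using 1
    simp [Fin.sum_univ_succ]; module
  · convert add_mem (add_mem (hL 0 1 (by decide)) (hL 2 3 (by decide))) hH using 1
    simp [Fin.sum_univ_succ]; module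
  · convert add_mem (add_mem (hL 0 1 (by decide)) (hL 2 3 (by decide))) (hR 4) using 1
    simp [Fin.sum_univ_succ]; module
  · convert add_mem (add_mem (hL 0 1 (by decide)) (hL 2 3 (by decide))) (hL 4 5 (by decide)) using 1
    simp [Fin.sum_univ_succ]; module
  · have h1 := EK_conic hn he (show (3 : Fin 7) ≠ 4 by decide)
    have h2 : cls (Fin.castLE hj) 2 ![1, 1, 1, 1, 1, 0, 0] ∈ EK n := by
      refine EK_cls hn he h1 0 1 2 (by decide) (by decide) (by decide) 1 (by simp) (by norm_num)
        fun t => ?_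
      fin_cases t <;> simp
    convert add_mem (CC_EK h2) (hL 5 6 (by decide)) using 1
    simp [cls, Fin.sum_univ_succ]; module
  · have hc : ∀ e : Fin 8 → Fin n, Function.Injective e →
        cls e 3 ![2, 0, 1, 1, 1, 1, 1, 1] ∈ EK n := by
      intro e he
      have h1 := EK_conic hn he (show (6 : Fin 8) ≠ 7 by decide)
      have h2 : cls e 2 ![1, 0, 0, 0, 1, 1, 1, 1] ∈ EK n := by
        refine EK_cls hn he h1 0 4 5 (by decide) (by decide) (by decide) 1 (by simp) (by norm_num)
          fun t => ?_
        fin_cases t <;> simp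
      refine EK_cls hn he h2 0 2 3 (by decide) (by decide) (by decide) 1 (by simp; norm_num)
        (by norm_num) fun t => ?_
      fin_cases t <;> simp
      norm_num
    have h1 := hc _ he
    have h2 := hc (Fin.castLE hj ∘ Equiv.swap 0 1) (he.comp (Equiv.injective _))
    refine CC_of_smul (r := 2) two_pos ?_
    convert add_mem (CC_EK h1) (CC_EK h2) using 1
    have s2 : Equiv.swap (0 : Fin 8) 1 2 = 2 := by decide
    have s3 : Equiv.swap (0 : Fin 8) 1 3 = 3 := by decide
    have s4 : Equiv.swap (0 : Fin 8) 1 4 = 4 := by decide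
    have s5 : Equiv.swap (0 : Fin 8) 1 5 = 5 := by decide
    have s6 : Equiv.swap (0 : Fin 8) 1 6 = 6 := by decide
    have s7 : Equiv.swap (0 : Fin 8) 1 7 = 7 := by decide
    simp [cls, Fin.sum_univ_succ, s2, s3, s4, s5, s6, s7]
    module

lemma CC_gen {n : ℕ} (hn : 3 ≤ n) {j : ℕ} (hj : j ≤ n) (h8 : j ≤ 8) : gen n hn j ∈ CC n := by
  match j with
  | 0 => exact CC_smul (by norm_num) (CC_hh hn)
  | 1 => exact CC_ruling hn _
  | 2 => exact CC_ruling hn _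
  | j + 3 => exact CC_gen_aux hn hj (by omega) h8

lemma ip_K {n : ℕ} (x : Fin (n + 1) → ℝ) :
    ip n x (-Kc n) = 3 * x 0 + ∑ i : Fin n, x i.succ := by
  simp [ip, Kc]; ring

lemma gen_K {n : ℕ} (hn : 3 ≤ n) {j : ℕ} (hj : j ≤ n) :
    ip n (gen n hn j) (-Kc n) = if j = 0 then 9 else if j ≤ 2 then 2 else 9 - (j : ℝ) := by
  rw [ip_K]
  match j with
  | 0 => simp [gen]; norm_num
  | 1 => simp [gen, ee_succ]; norm_num
  | 2 => simp [gen, ee_succ]; norm_num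
  | j + 3 =>
    simp only [gen]
    simp [ES_succ, card_ini hj]; ring

/-- For `j ≥ 9` the generator `gen j` has degree at most `0`; once a multiple of a generator of
positive degree makes the total degree positive, the sum is in the cone. -/
lemma gen_pair {n : ℕ} (hn : 3 ≤ n) {i j : ℕ} (hi : i ≤ 8) (hj : j ≤ n) (h9 : 9 ≤ j) {t : ℝ}
    (ht : 0 < ip n (gen n hn j + t • gen n hn i) (-Kc n)) :
    gen n hn j + t • gen n hn i ∈ CC n := by
  rw [ip_add_left, ip_smul_left, gen_K hn hj, gen_K hn (by omega), if_neg (by omega),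
    if_neg (by omega)] at ht
  have hgj : gen n hn j = (3 : ℝ) • hh n - ES (ini n j) := by
    obtain ⟨k, rfl⟩ : ∃ k, j = k + 3 := ⟨j - 3, by omega⟩
    rfl
  have hrul : ∀ a : Fin n, (a : ℕ) < j → 0 < 9 - (j : ℝ) + t * 2 →
      gen n hn j + t • (hh n - ee a) ∈ CC n := by
    intro a ha h
    have ha' : a ∈ ini n j := mem_ini.2 ha
    obtain ⟨k, rfl⟩ : ∃ k, j = 9 + k := ⟨j - 9, by omega⟩
    convert CC_B hn k ((ini n (9 + k)).erase a) (notMem_erase _ _)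
      (by rw [card_erase_of_mem ha', card_ini hj]; omega) t
      (by push_cast at h; linarith) using 1
    rw [hgj, ES_erase ha']; abel
  have hflat : ∀ s : ℕ, s ≤ 8 → 0 < 9 - (j : ℝ) + t * (9 - s) →
      gen n hn j + t • ((3 : ℝ) • hh n - ES (ini n s)) ∈ CC n := by
    intro s hs h
    have hsub : ini n s ⊆ ini n j := fun x hx => mem_ini.2 (by have := mem_ini.1 hx; omega)
    have hcard : (ini n j \ ini n s).card = j - s := by
      rw [card_sdiff_of_subset hsub, card_ini hj, card_ini (by omega)]
    have hES : ES (ini n j \ ini n s) + ES (ini n s) = ES (ini n j) := sum_sdiff hsub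
    convert CC_A hn (S₀ := ini n s) (m := 9 - s) (by omega)
      (by rw [card_ini (by omega)]; omega) (j - 9) (ini n j \ ini n s) disjoint_sdiff
      (by rw [hcard]; omega) (1 + t) (by
        rw [hcard, Nat.cast_sub (by omega), Nat.cast_sub (by omega)]; push_cast; linarith) using 1
    rw [hgj, ← hES]; module
  match i with
  | 0 =>
    have := hflat 0 (by omega) (by simpa using ht)
    simpa [gen, ini, ES] using this
  | 1 => exact hrul _ (by simp; omega) (by simpa using ht)
  | 2 => exact hrul _ (by simp; omega) (by simpa using ht)
  | i + 3 => exact hflat (i + 3) hi (by simpa using ht)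

/-- Suppose the vectors `p i`, `i ∈ I`, have degree `κ i > 0` and lie in the cone, while `p j`,
`j ∈ J`, has degree `-δ j ≤ 0`, and `p j + t • p i` is in the cone as soon as its degree is
positive. Then a nonnegative combination of positive total degree is in the cone: the degree
available from `I` is distributed among the `p j` in proportion to what each of them needs. -/
lemma transport {n : ℕ} {I J : Finset ℕ} {p : ℕ → Fin (n + 1) → ℝ} {a κ δ : ℕ → ℝ}
    (hκ : ∀ i ∈ I, 0 < κ i) (haI : ∀ i ∈ I, 0 ≤ a i) (haJ : ∀ j ∈ J, 0 ≤ a j)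
    (hδ : ∀ j ∈ J, 0 ≤ δ j) (hp : ∀ i ∈ I, p i ∈ CC n)
    (hQ : ∀ i ∈ I, ∀ j ∈ J, ∀ t : ℝ, δ j < t * κ i → p j + t • p i ∈ CC n)
    (h : ∑ j ∈ J, a j * δ j < ∑ i ∈ I, a i * κ i) :
    ∑ i ∈ I, a i • p i + ∑ j ∈ J, a j • p j ∈ CC n := by
  set K := ∑ i ∈ I, a i * κ i with hK
  set B := ∑ j ∈ J, a j * δ j with hB
  set A := ∑ j ∈ J, a j with hA
  set D := ∑ i ∈ I, a i • p i with hD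
  have hA0 : 0 ≤ A := sum_nonneg haJ
  have hB0 : 0 ≤ B := sum_nonneg fun j hj => mul_nonneg (haJ j hj) (hδ j hj)
  have hK0 : 0 < K := by linarith
  -- `η` is a slack small enough that the total share `∑ a j * (δ j / K + η)` is at most `1`
  set η := (K - B) / (K * (A + 1)) with hη
  have hη0 : 0 < η := div_pos (by linarith) (by positivity)
  have hpair : ∀ j ∈ J, p j + (δ j / K + η) • D ∈ CC n := by
    intro j hj
    have h1 : ∀ i ∈ I, (a i * κ i / K) • (p j + ((δ j / K + η) * K / κ i) • p i) ∈ CC n := by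
      intro i hi
      have hκi := hκ i hi
      refine CC_smul (div_nonneg (mul_nonneg (haI i hi) hκi.le) hK0.le) (hQ i hi j hj _ ?_)
      rw [div_mul_cancel₀ _ hκi.ne', add_mul, div_mul_cancel₀ _ hK0.ne']
      nlinarith
    convert (CC n).sum_mem h1 using 1
    simp only [smul_add, sum_add_distrib]
    rw [← sum_smul, ← sum_div, ← hK, div_self hK0.ne', one_smul, hD, smul_sum]
    congr 1
    refine sum_congr rfl fun i hi => ?_
    have hκi := hκ i hi
    rw [smul_smul, smul_smul]
    congr 1
    field_simp
  have h2 : ∑ j ∈ J, a j * (δ j / K + η) ≤ 1 := by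
    have : ∑ j ∈ J, a j * (δ j / K + η) = B / K + A * η := by
      simp only [mul_add, sum_add_distrib, hB, hA, sum_mul, sum_div, mul_div_assoc]
    rw [this, hη]
    have h3 : A * ((K - B) / (K * (A + 1))) ≤ (K - B) / K := by
      rw [← mul_div_assoc, div_le_div_iff₀ (by positivity) hK0]
      have : 0 < (K - B) * K := mul_pos (by linarith) hK0
      nlinarith
    have h4 : B / K + (K - B) / K = 1 := by field_simp; ring
    linarith
  have hDC : D ∈ CC n := (CC n).sum_mem fun i hi => CC_smul (haI i hi) (hp i hi)
  convert (CC n).add_mem (CC_smul (sub_nonneg.2 h2) hDC)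
    ((CC n).sum_mem fun j hj => CC_smul (haJ j hj) (hpair j hj)) using 1
  simp only [smul_add, sum_add_distrib, smul_smul]
  rw [← sum_smul]
  module

/-! ### Reduced classes lie in the cone -/

/-- Telescoping sum behind the `E_{x+1}`-coordinate of `decomp`: the generators `gen (i + 3)` with
`i < k` involving `E_{x+1}` are those with `x < i + 3`. -/
lemma tele (M : ℕ → ℝ) (x k : ℕ) :
    ∑ i ∈ range k, (M (i + 2) - M (i + 3)) * (if x < i + 3 then 1 else 0) =
      M (max 2 x) - M (max (max 2 x) (k + 2)) := by
  induction k with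
  | zero => simp
  | succ k ih =>
    rw [sum_range_succ, ih]
    by_cases h : x < k + 3
    · rw [if_pos h, max_eq_right (by omega : max 2 x ≤ k + 2),
        max_eq_right (by omega : max 2 x ≤ k + 1 + 2)]
      ring
    · rw [if_neg h, max_eq_left (by omega : k + 2 ≤ max 2 x),
        max_eq_left (by omega : k + 1 + 2 ≤ max 2 x)]
      ring

/-- The multiplicity `m_{k+1} = x · E_{k+1}`, extended by `0` to `k ≥ n`. -/
def mult {n : ℕ} (x : Fin (n + 1) → ℝ) (k : ℕ) : ℝ :=
  if h : k < n then - x (Fin.succ ⟨k, h⟩) else 0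

/-- The coefficients of `x` with respect to the family `gen`; they are nonnegative when `x` is
reduced with nonnegative multiplicities. -/
def coef {n : ℕ} (x : Fin (n + 1) → ℝ) (j : ℕ) : ℝ :=
  match j with
  | 0 => (x 0 - mult x 0 - mult x 1 - mult x 2) / 3
  | 1 => mult x 0 - mult x 2
  | 2 => mult x 1 - mult x 2
  | j + 3 => mult x (j + 2) - mult x (j + 3)

lemma decomp {n : ℕ} (hn : 3 ≤ n) (x : Fin (n + 1) → ℝ) :
    x = ∑ j ∈ range (n + 1), coef x j • gen n hn j := by
  obtain ⟨k, rfl⟩ : ∃ k, n = k + 2 := ⟨n - 2, by omega⟩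
  have hlast : mult x (k + 2) = 0 := by simp [mult]
  rw [sum_range_succ', sum_range_succ', sum_range_succ']
  funext j
  refine Fin.cases ?_ (fun i => ?_) j
  · have h1 := tele (mult x) 0 k
    rw [max_eq_left (by omega : 0 ≤ 2), max_eq_right (by omega), hlast] at h1
    simp only [show ∀ i : ℕ, 0 < i + 3 from fun i => by omega, if_true, mul_one] at h1
    simp only [Pi.add_apply, Finset.sum_apply, Pi.smul_apply, smul_eq_mul, gen, coef,
      Pi.sub_apply, hh_zero, ES_zero, ee_zero, mul_one, sub_zero, ← sum_mul]
    rw [h1]; ring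
  · have h1 := tele (mult x) i k
    rw [max_eq_right (by omega : max 2 (i : ℕ) ≤ k + 2), hlast] at h1
    have hi : x i.succ = - mult x i := by simp [mult]
    simp only [Pi.add_apply, Finset.sum_apply, Pi.smul_apply, smul_eq_mul, gen, coef,
      Pi.sub_apply, hh_succ, ES_succ, ee_succ, mem_ini, mul_zero, zero_sub, mul_neg,
      sum_neg_distrib, Fin.ext_iff]
    rw [h1, hi]
    rcases i with ⟨_ | _ | _ | i, hi⟩ <;> simp <;> ring

/-- Reduced classes with positive multiplicities and positive degree against `-K` lie in the cone.
The multiplicities are minus the coordinates, hence the signs in `hmono` and `hneg`. -/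
lemma CC_reduced {n : ℕ} (hn : 3 ≤ n) {x : Fin (n + 1) → ℝ}
    (hmono : Monotone fun i : Fin n => x i.succ) (hneg : ∀ i : Fin n, x i.succ < 0)
    (hred : 0 ≤ ip n x (lr ⟨0, by omega⟩ ⟨1, by omega⟩ ⟨2, by omega⟩))
    (hK : 0 < ip n x (-Kc n)) : x ∈ CC n := by
  have hM : ∀ i j : ℕ, i ≤ j → mult x j ≤ mult x i := by
    intro i j hij
    unfold mult
    split_ifs with h1 h2 h2
    · exact neg_le_neg (hmono (show (⟨i, h2⟩ : Fin n) ≤ ⟨j, h1⟩ from hij))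
    · omega
    · linarith [hneg ⟨i, h2⟩]
    · rfl
  have hcoef : ∀ j, 0 ≤ coef x j := by
    intro j
    match j with
    | 0 =>
      rw [ip_lr] at hred
      have e0 : mult x 0 = - x (Fin.succ ⟨0, by omega⟩) := dif_pos (by omega)
      have e1 : mult x 1 = - x (Fin.succ ⟨1, by omega⟩) := dif_pos (by omega)
      have e2 : mult x 2 = - x (Fin.succ ⟨2, by omega⟩) := dif_pos (by omega)
      simp only [coef, e0, e1, e2]
      linarith
    | 1 => exact sub_nonneg.2 (hM _ _ (by omega))
    | 2 => exact sub_nonneg.2 (hM _ _ (by omega))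
    | j + 3 => exact sub_nonneg.2 (hM _ _ (by omega))
  have hdeg : ip n x (-Kc n) =
      ∑ j ∈ range (n + 1), coef x j * ip n (gen n hn j) (-Kc n) := by
    let f : (Fin (n + 1) → ℝ) →+ ℝ := ⟨⟨fun y => ip n y (-Kc n), by simp [ip]⟩,
      fun y z => ip_add_left n y z _⟩
    have h1 : f x = ip n x (-Kc n) := rfl
    rw [← h1]
    conv_lhs => rw [decomp hn x]
    rw [map_sum]
    exact sum_congr rfl fun j _ => ip_smul_left n _ _ _
  rw [hdeg, ← sum_filter_add_sum_filter_not _ (· ≤ 8)] at hK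
  rw [decomp hn x, ← sum_filter_add_sum_filter_not _ (· ≤ 8)]
  refine transport (κ := fun i => ip n (gen n hn i) (-Kc n))
    (δ := fun j => - ip n (gen n hn j) (-Kc n)) (fun i hi => ?_) (fun i _ => hcoef i)
    (fun i _ => hcoef i) (fun j hj => ?_) (fun i hi => ?_) (fun i hi j hj t ht => ?_) ?_
  · simp only [mem_filter, mem_range] at hi
    rw [gen_K hn (by omega)]
    split_ifs
    · norm_num
    · norm_num
    · have : (i : ℝ) ≤ 8 := by exact_mod_cast hi.2
      linarith
  · simp only [mem_filter, mem_range] at hj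
    rw [gen_K hn (by omega), if_neg (by omega), if_neg (by omega)]
    have : (9 : ℝ) ≤ j := by exact_mod_cast (by omega : 9 ≤ j)
    linarith
  · simp only [mem_filter, mem_range] at hi
    exact CC_gen hn (by omega) hi.2
  · simp only [mem_filter, mem_range] at hi hj
    refine gen_pair hn hi.2 (by omega) (by omega) ?_
    rw [ip_add_left, ip_smul_left]
    linarith
  · simp only [mul_neg, sum_neg_distrib]
    linarith

/-! ### Reduction to a reduced class -/

lemma hh_pos {n : ℕ} (hn : 3 ≤ n) {d : Fin (n + 1) → ℝ} (hdE : ∀ E ∈ EK n, 0 < ip n d E) :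
    0 < d 0 := by
  have hne : (⟨0, by omega⟩ : Fin n) ≠ ⟨1, by omega⟩ := by simp
  have h0 := hdE _ (EK_line hn hne)
  have h1 := hdE _ (EK_ee hn ⟨0, by omega⟩)
  have h2 := hdE _ (EK_ee hn ⟨1, by omega⟩)
  rw [ip_sub_right, ip_sub_right, ip_hh] at h0
  linarith

/-- For `d` in the positive cone, the classes `y` with `y · y = 1` and `0 < d · y ≤ C` form a bounded
set, by Cauchy–Schwarz applied to the `E_i`-coordinates. -/
lemma coord_bound {n : ℕ} {d : Fin (n + 1) → ℝ} (hd0 : 0 < d 0) (hdd : 0 < ip n d d) (C : ℝ) :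
    ∃ R : ℕ, ∀ y : Fin (n + 1) → ℝ, ip n y y = 1 → 0 < ip n d y → ip n d y ≤ C →
      ∀ j, |y j| ≤ R := by
  set r := √(∑ i : Fin n, d i.succ * d i.succ) with hr
  have hs0 : 0 ≤ ∑ i : Fin n, d i.succ * d i.succ := sum_nonneg fun i _ => mul_self_nonneg _
  have hr2 : r ^ 2 = ∑ i : Fin n, d i.succ * d i.succ := Real.sq_sqrt hs0
  have hr0 : 0 ≤ r := Real.sqrt_nonneg _
  have hrd : r < d 0 := by
    unfold ip at hdd
    nlinarith
  obtain ⟨R, hR⟩ := exists_nat_gt (C / (d 0 - r))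
  refine ⟨R, fun y hy hpos hle => ?_⟩
  have hy' : ∑ i : Fin n, y i.succ ^ 2 = y 0 ^ 2 - 1 := by
    unfold ip at hy
    simp only [pow_two]; linarith
  have hcs : (∑ i : Fin n, d i.succ * y i.succ) ^ 2 ≤ r ^ 2 * y 0 ^ 2 := by
    refine (sum_mul_sq_le_sq_mul_sq _ _ _).trans ?_
    rw [hy', hr2]
    simp only [pow_two] at *
    nlinarith
  have habs : |∑ i : Fin n, d i.succ * y i.succ| ≤ r * |y 0| := by
    refine abs_le_of_sq_le_sq ?_ (by positivity)
    rw [mul_pow, sq_abs]; exact hcs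
  have hb := abs_le.1 habs
  have hy0 : |y 0| ≤ R := by
    have hip : ip n d y = d 0 * y 0 - ∑ i : Fin n, d i.succ * y i.succ := rfl
    have hy00 : 0 ≤ y 0 := by
      by_contra! h
      rw [abs_of_neg h] at hb
      nlinarith
    rw [abs_of_nonneg hy00] at hb ⊢
    have : y 0 * (d 0 - r) ≤ C := by nlinarith
    have : y 0 ≤ C / (d 0 - r) := by rw [le_div_iff₀ (by linarith)]; exact this
    linarith
  intro j
  refine Fin.cases hy0 (fun i => le_trans (sq_le_sq.1 ?_) hy0) j
  have := single_le_sum (f := fun i : Fin n => y i.succ ^ 2) (fun i _ => sq_nonneg _) (mem_univ i)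
  linarith

/-- The function `w ↦ (w d) · H` attains its minimum on `W_n`. It equals `d · w⁻¹H`, and the
classes `w⁻¹H` are integral of square `1`, so by `coord_bound` only finitely many of them satisfy
`d · w⁻¹H ≤ d · H`. -/
lemma exists_min {n : ℕ} (hn : 3 ≤ n) {d : Fin (n + 1) → ℝ} (hdd : 0 < ip n d d)
    (hdE : ∀ E ∈ EK n, 0 < ip n d E) :
    ∃ w ∈ Wgroup n, ∀ u ∈ Wgroup n, w d 0 ≤ u d 0 := by
  set Y : Set (Fin (n + 1) → ℝ) := {y | (∃ w ∈ Wgroup n, y = w (hh n)) ∧ ip n d y ≤ d 0} with hY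
  have hval : ∀ w ∈ Wgroup n, 0 < ip n d (w (hh n)) ∧ ip n (w (hh n)) (w (hh n)) = 1 := by
    intro w hw
    obtain ⟨w', hw', inv, adj⟩ := W_inv hn hw
    obtain ⟨w2, hw2, inv2, adj2⟩ := W_inv hn hw'
    constructor
    · rw [ip_comm, adj, ip_comm, ip_hh]
      refine hh_pos hn fun E hE => ?_
      rw [adj2]; exact hdE _ (EK_W hw2 hE)
    · rw [adj, inv, ip_hh, hh_zero]
  obtain ⟨R, hR⟩ := coord_bound (hh_pos hn hdE) hdd (d 0)
  have hfin : Y.Finite := by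
    refine ((Set.finite_Icc (fun _ => -(R : ℤ)) (fun _ : Fin (n + 1) => (R : ℤ))).image
      fun (z : Fin (n + 1) → ℤ) j => (z j : ℝ)).subset ?_
    rintro y ⟨⟨w, hw, rfl⟩, hle⟩
    obtain ⟨z, hz⟩ := W_int hw (hh n) ⟨Pi.single 0 1, fun j => by
      simp only [hh, Pi.single_apply]; split_ifs <;> simp⟩
    have hb := hR _ (hval w hw).2 (hval w hw).1 hle
    refine ⟨z, ⟨fun j => ?_, fun j => ?_⟩, (funext hz).symm⟩
    · have := (abs_le.1 (hb j)).1
      rw [hz] at this; exact_mod_cast this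
    · have := (abs_le.1 (hb j)).2
      rw [hz] at this; exact_mod_cast this
  have hne : Y.Nonempty := ⟨hh n, ⟨1, one_mem _, rfl⟩, (ip_hh n d).le⟩
  obtain ⟨y, ⟨⟨w, hw, rfl⟩, hle⟩, hmin⟩ := Set.exists_min_image Y (ip n d) hfin hne
  have hmin' : ∀ v ∈ Wgroup n, ip n d (w (hh n)) ≤ ip n d (v (hh n)) := by
    intro v hv
    rcases le_total (ip n d (v (hh n))) (d 0) with h | h
    · exact hmin _ ⟨⟨v, hv, rfl⟩, h⟩
    · exact hle.trans h
  obtain ⟨w', hw', inv, adj⟩ := W_inv hn hw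
  refine ⟨w', hw', fun u hu => ?_⟩
  obtain ⟨u', hu', -, adju⟩ := W_inv hn hu
  have h := hmin' u' hu'
  rwa [← adju, ip_hh, ip_comm, adj, ip_comm, ip_hh] at h

/-- Theorem 2.5: every `c₁`-positive class in the `K`-symplectic cone is a finite
positive linear combination of exceptional classes. -/
theorem positive_class_is_positive_combination_of_exceptional
    (n : ℕ) (hn : 3 ≤ n) (d : Fin (n + 1) → ℝ)
    (hdd : 0 < ip n d d)
    (hdK : 0 < ip n d (-Kc n))
    (hdE : ∀ E ∈ EK n, 0 < ip n d E) :
    ∃ (S : Finset (Fin (n + 1) → ℝ)) (c : (Fin (n + 1) → ℝ) → ℝ),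
      ↑S ⊆ EK n ∧ (∀ E ∈ S, 0 < c E) ∧ d = ∑ E ∈ S, c E • E := by
  refine CC_elim ?_
  obtain ⟨w, hw, hmin⟩ := exists_min hn hdd hdE
  obtain ⟨s, hs, es⟩ := permAct_mem hn (Tuple.sort fun i : Fin n => w d i.succ)
  have hu : s * w ∈ Wgroup n := mul_mem hs hw
  set x := (s * w) d with hx
  have hxs : x = permAct (Tuple.sort fun i : Fin n => w d i.succ) (w d) := es _
  obtain ⟨v, hv, inv, adj⟩ := W_inv hn hu
  suffices h : x ∈ CC n by
    rw [← inv d]; exact CC_W hv h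
  refine CC_reduced hn ?_ (fun i => ?_) ?_ ?_
  · rw [hxs]; exact Tuple.monotone_sort fun i : Fin n => w d i.succ
  · have h := hdE _ (EK_W hv (EK_ee hn i))
    rw [← adj, ip_ee] at h
    linarith
  · obtain ⟨c, hc, ec⟩ := cremona_mem hn (a := ⟨0, by omega⟩) (b := ⟨1, by omega⟩)
      (c := ⟨2, by omega⟩) (by simp) (by simp) (by simp)
    have h := hmin _ (mul_mem hc hu)
    change _ ≤ c x 0 at h
    rw [ec] at h
    have h0 : x 0 = w d 0 := by rw [hxs, permAct_zero]
    simp only [Pi.add_apply, Pi.smul_apply, smul_eq_mul, lr, Pi.sub_apply, hh_zero, ee_zero,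
      h0] at h
    simp only [lr]
    linarith
  · rw [hx, adj, W_K hn hv]; exact hdK
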